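/- Let F₄ = GF(4), let n be odd, let g₁, g₂ be monic divisors of Xⁿ−1 in F₄[X], and let ν ∈ F₄[X] with ν−1 coprime to Xⁿ−1. Assume: g₁ divides g₁^{⊥h}; g₂ divides g₂^{⊥h}; g₂ divides the remainder of (ν+ν̄)·g₁^{⊥h} modulo Xⁿ−1; g₁ divides the remainder of (ν·ν̄+1)·g₁^{⊥h} modulo Xⁿ−1; and g₂ divides the remainder of (ν·ν̄+1)·g₂^{⊥h} modulo Xⁿ−1. Then the code C ⊆ F₄^{2n}, defined as the F₄-span of all vectors ([a·ν·g₁]ₙ, [a·g₁]ₙ) and ([b·g₂]ₙ, [b·ν·g₂]ₙ) for a, b ∈ F₄[X], satisfies C^{⊥h} ⊆ C and has F₄-dimension 2n − deg g₁ − deg g₂. -/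

import Mathlib

open Polynomial

set_option synthInstance.maxHeartbeats 1000000
set_option maxHeartbeats 1000000

noncomputable section

/-- The field `F₄ = GF(4)`. -/
abbrev F4 : Type := GaloisField 2 2

/-- The coefficient vector `[p]ₙ ∈ F₄ⁿ` of the remainder of `p` modulo `Xⁿ - 1`
(coefficient of `X^i` in position `i`). -/
def coeffVec (n : ℕ) (p : Polynomial F4) : Fin n → F4 :=
  fun i => (p % (X ^ n - 1)).coeff i

/-- The Hermitian inner product `⟨u,v⟩_h = ∑ i, u i * (v i)²` on `F₄^m`. -/
def hermInner {m : ℕ} (u v : Fin m → F4) : F4 := ∑ i, u i * (v i) ^ 2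

/-- The Hermitian inner product on `F₄ⁿ × F₄ⁿ`: the sum of the Hermitian inner
products of the two components. -/
def hermInner2 {n : ℕ} (u v : (Fin n → F4) × (Fin n → F4)) : F4 :=
  hermInner u.1 v.1 + hermInner u.2 v.2

/-- The conjugate transform `f̄ := f₀² + ∑_{i=1}^{n-1} f_i² X^{n-i}`, where `f` is first
reduced modulo `Xⁿ - 1`. -/
def conjT (n : ℕ) (f : Polynomial F4) : Polynomial F4 :=
  C (((f % (X ^ n - 1)).coeff 0) ^ 2) +
    ∑ i ∈ Finset.Ico 1 n, C (((f % (X ^ n - 1)).coeff i) ^ 2) * X ^ (n - i)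

/-- The Hermitian dual generator `g^{⊥h}(X) := ∑_{j=0}^{deg h} (h_j)² X^{deg h - j}`,
the conjugate reciprocal of the check polynomial `h = (Xⁿ-1)/g`. -/
def dualGen (n : ℕ) (g : Polynomial F4) : Polynomial F4 :=
  ∑ j ∈ Finset.range (((X ^ n - 1) / g).natDegree + 1),
    C ((((X ^ n - 1) / g).coeff j) ^ 2) * X ^ (((X ^ n - 1) / g).natDegree - j)

lemma hermInner_add_right {m : ℕ} (u v w : Fin m → F4) :
    hermInner u (v + w) = hermInner u v + hermInner u w := by
  simp only [hermInner, Pi.add_apply]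
  rw [← Finset.sum_add_distrib]
  refine Finset.sum_congr rfl fun i _ => ?_
  rw [add_pow_char (v i) (w i) 2, mul_add]

lemma hermInner_smul_right {m : ℕ} (c : F4) (u v : Fin m → F4) :
    hermInner u (c • v) = c ^ 2 * hermInner u v := by
  simp only [hermInner, Pi.smul_apply, smul_eq_mul, mul_pow, Finset.mul_sum]
  exact Finset.sum_congr rfl fun i _ => by ring

/-- The Hermitian dual code `C^{⊥h} = {v | ∀ u ∈ C, ⟨u,v⟩_h = 0}` of a linear code in `F₄^m`. -/
def hermDual {m : ℕ} (Ccode : Submodule F4 (Fin m → F4)) : Submodule F4 (Fin m → F4) where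
  carrier := {v | ∀ u ∈ Ccode, hermInner u v = 0}
  zero_mem' := by intro u _; simp [hermInner]
  add_mem' := by
    intro v w hv hw u hu
    rw [hermInner_add_right, hv u hu, hw u hu, add_zero]
  smul_mem' := by
    intro c v hv u hu
    rw [hermInner_smul_right, hv u hu, mul_zero]

lemma hermInner2_add_right {n : ℕ} (u v w : (Fin n → F4) × (Fin n → F4)) :
    hermInner2 u (v + w) = hermInner2 u v + hermInner2 u w := by
  simp only [hermInner2, Prod.fst_add, Prod.snd_add, hermInner_add_right]
  ring

lemma hermInner2_smul_right {n : ℕ} (c : F4) (u v : (Fin n → F4) × (Fin n → F4)) :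
    hermInner2 u (c • v) = c ^ 2 * hermInner2 u v := by
  simp only [hermInner2, Prod.smul_fst, Prod.smul_snd, hermInner_smul_right]
  ring

/-- The Hermitian dual code of a linear code in `F₄ⁿ × F₄ⁿ` (identified with `F₄^{2n}`). -/
def hermDualPair {n : ℕ} (Ccode : Submodule F4 ((Fin n → F4) × (Fin n → F4))) :
    Submodule F4 ((Fin n → F4) × (Fin n → F4)) where
  carrier := {v | ∀ u ∈ Ccode, hermInner2 u v = 0}
  zero_mem' := by intro u _; simp [hermInner2, hermInner]
  add_mem' := by
    intro v w hv hw u hu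
    rw [hermInner2_add_right, hv u hu, hw u hu, add_zero]
  smul_mem' := by
    intro c v hv u hu
    rw [hermInner2_smul_right, hv u hu, mul_zero]

/-- Hamming weight of a vector. -/
def hammingWt {m : ℕ} (u : Fin m → F4) : ℕ := Nat.card {i : Fin m // u i ≠ 0}

/-- The 2-generator quasi-cyclic code `C(g₁,g₂,ν)` of length `2n` and index 2:
the `F₄`-span of all `([a·ν·g₁]ₙ, [a·g₁]ₙ)` and `([b·g₂]ₙ, [b·ν·g₂]ₙ)`. -/
def Cqc (n : ℕ) (g₁ g₂ ν : Polynomial F4) : Submodule F4 ((Fin n → F4) × (Fin n → F4)) :=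
  Submodule.span F4
    ({x | ∃ a : Polynomial F4, x = (coeffVec n (a * ν * g₁), coeffVec n (a * g₁))} ∪
     {x | ∃ b : Polynomial F4, x = (coeffVec n (b * g₂), coeffVec n (b * ν * g₂))})

/-- The quasi-cyclic code `D`: the `F₄`-span of all `([-ν̄·c·g₁^{⊥h}]ₙ, [c·g₁^{⊥h}]ₙ)`
and `([s·g₂^{⊥h}]ₙ, [-ν̄·s·g₂^{⊥h}]ₙ)`. -/
def Dqc (n : ℕ) (g₁ g₂ ν : Polynomial F4) : Submodule F4 ((Fin n → F4) × (Fin n → F4)) :=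
  Submodule.span F4
    ({x | ∃ c : Polynomial F4,
        x = (coeffVec n (-(conjT n ν) * c * dualGen n g₁), coeffVec n (c * dualGen n g₁))} ∪
     {x | ∃ s : Polynomial F4,
        x = (coeffVec n (s * dualGen n g₂), coeffVec n (-(conjT n ν) * s * dualGen n g₂))})

/-- The quotient ring `R = F₄[X]/(Xⁿ - 1)`. -/
abbrev Rng (n : ℕ) : Type := Polynomial F4 ⧸ Ideal.span ({X ^ n - 1} : Set (Polynomial F4))

/-- The natural projection `F₄[X] → R`. -/
def toRng (n : ℕ) : Polynomial F4 →+* Rng n := Ideal.Quotient.mk _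

/-- The `R`-linear map `R → R × R`, `a ↦ (a·û, a·v̂)`, where `û, v̂` are the images of
`u, v` in `R`. -/
def qcMap (n : ℕ) (u v : Polynomial F4) : Rng n →ₗ[Rng n] Rng n × Rng n :=
  (LinearMap.toSpanSingleton (Rng n) (Rng n) (toRng n u)).prod
    (LinearMap.toSpanSingleton (Rng n) (Rng n) (toRng n v))

lemma P_monic {n : ℕ} (hn : 0 < n) : (X ^ n - 1 : Polynomial F4).Monic := by
  simpa using monic_X_pow_sub_C (1 : F4) hn.ne'

lemma P_natDegree (n : ℕ) : (X ^ n - 1 : Polynomial F4).natDegree = n := by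
  simpa using natDegree_X_pow_sub_C (n := n) (r := (1 : F4))

lemma coeffVec_add (n : ℕ) (p q : Polynomial F4) :
    coeffVec n (p + q) = coeffVec n p + coeffVec n q := by
  ext i; simp [coeffVec, Polynomial.add_mod]

lemma coeffVec_smul (n : ℕ) (c : F4) (p : Polynomial F4) :
    coeffVec n (c • p) = c • coeffVec n p := by
  ext i
  simp only [coeffVec, Pi.smul_apply, smul_eq_mul]
  rcases Nat.eq_zero_or_pos n with rfl | hn
  · exact i.elim0
  rw [← Polynomial.modByMonic_eq_mod _ (P_monic hn), ← Polynomial.modByMonic_eq_mod _ (P_monic hn),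
    Polynomial.smul_modByMonic, Polynomial.coeff_smul, smul_eq_mul]

def cvL (n : ℕ) : Polynomial F4 →ₗ[F4] (Fin n → F4) where
  toFun := coeffVec n
  map_add' := coeffVec_add n
  map_smul' := coeffVec_smul n

lemma cvL_apply (n : ℕ) (p) : cvL n p = coeffVec n p := rfl

lemma mod_natDegree_lt {n : ℕ} (hn : 0 < n) (p : Polynomial F4) :
    (p % (X ^ n - 1)).degree < (n : WithBot ℕ) := by
  have := Polynomial.degree_mod_lt p (P_monic hn).ne_zero
  rwa [Polynomial.degree_eq_natDegree (P_monic hn).ne_zero, P_natDegree] at this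

lemma coeffVec_eq_zero {n : ℕ} (hn : 0 < n) (p : Polynomial F4) :
    coeffVec n p = 0 ↔ (X ^ n - 1) ∣ p := by
  rw [← EuclideanDomain.mod_eq_zero]
  · constructor
    · intro h
      ext i
      by_cases hi : i < n
      · exact congrFun h ⟨i, hi⟩
      · exact Polynomial.coeff_eq_zero_of_degree_lt
          ((mod_natDegree_lt hn p).trans_le (by exact_mod_cast not_lt.mp hi))
    · intro h
      ext i; simp [coeffVec, h]

lemma coeffVec_congr {n : ℕ} (hn : 0 < n) {p q : Polynomial F4} (h : (X ^ n - 1) ∣ p - q) :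
    coeffVec n p = coeffVec n q := by
  rw [← coeffVec_eq_zero hn, ← cvL_apply, map_sub, sub_eq_zero] at h
  exact h

lemma coeffVec_of_lt {n : ℕ} {p : Polynomial F4} (hp : p.degree < n)
    (i : Fin n) : coeffVec n p i = p.coeff i := by
  have hn : 0 < n := i.pos
  unfold coeffVec
  rw [(Polynomial.mod_eq_self_iff (P_monic hn).ne_zero).2]
  rwa [Polynomial.degree_eq_natDegree (P_monic hn).ne_zero, P_natDegree]

lemma coeffVec_surj (n : ℕ) (u : Fin n → F4) : ∃ p, coeffVec n p = u := by
  refine ⟨∑ i : Fin n, C (u i) * X ^ (i : ℕ), ?_⟩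
  ext i
  rw [coeffVec_of_lt]
  · simp [Polynomial.coeff_C_mul, Polynomial.coeff_X_pow,
      Fin.val_inj]
  · refine (Polynomial.degree_sum_le _ _).trans_lt ?_
    rw [Finset.sup_lt_iff (by exact WithBot.bot_lt_coe n)]
    intro j _
    exact (Polynomial.degree_C_mul_X_pow_le _ _).trans_lt (by exact_mod_cast j.2)

lemma P_dvd_pow (n k : ℕ) : (X ^ n - 1 : Polynomial F4) ∣ X ^ (n * k) - 1 := by
  rw [pow_mul]; exact sub_one_dvd_pow_sub_one _ _

lemma P_dvd_shift (n k m : ℕ) : (X ^ n - 1 : Polynomial F4) ∣ X ^ (n * k + m) - X ^ m := by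
  have := (P_dvd_pow n k).mul_right (X ^ m)
  rwa [sub_mul, one_mul, ← pow_add] at this

lemma coeffVec_mono {n : ℕ} (a : F4) (i : ℕ) (k : Fin n) :
    coeffVec n (C a * X ^ i) k = if i % n = k then a else 0 := by
  have hn : 0 < n := k.pos
  have h : coeffVec n (C a * X ^ i) = coeffVec n (C a * X ^ (i % n)) := by
    apply coeffVec_congr hn
    rw [← mul_sub]
    apply Dvd.dvd.mul_left
    have := P_dvd_shift n (i / n) (i % n)
    rwa [Nat.div_add_mod] at this
  rw [h, coeffVec_of_lt]
  · simp [Polynomial.coeff_X_pow, eq_comm]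
  · exact (Polynomial.degree_C_mul_X_pow_le _ _).trans_lt (by exact_mod_cast Nat.mod_lt _ hn)

/-- conjugation on polynomials -/
def bta (n : ℕ) : Polynomial F4 →+* Polynomial F4 :=
  Polynomial.eval₂RingHom ((C : F4 →+* Polynomial F4).comp (frobenius F4 2)) (X ^ (n - 1))

lemma bta_C (n : ℕ) (a : F4) : bta n (C a) = C (a ^ 2) := by
  simp [bta, frobenius_def]

lemma bta_X (n : ℕ) : bta n X = X ^ (n - 1) := by
  simp [bta]

lemma bta_P (n : ℕ) : (X ^ n - 1 : Polynomial F4) ∣ bta n (X ^ n - 1) := by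
  rw [map_sub, map_pow, map_one, bta_X, ← pow_mul, mul_comm]
  exact P_dvd_pow n _

lemma bta_map_dvd (n : ℕ) {p q : Polynomial F4} (h : p ∣ q) : bta n p ∣ bta n q := by
  obtain ⟨c, rfl⟩ := h
  exact ⟨bta n c, RingHom.map_mul _ _ _⟩

lemma bta_dvd (n : ℕ) {p : Polynomial F4} (h : (X ^ n - 1 : Polynomial F4) ∣ p) :
    (X ^ n - 1 : Polynomial F4) ∣ bta n p :=
  (bta_P n).trans (bta_map_dvd n h)

lemma F4_pow4 (a : F4) : (a ^ 2) ^ 2 = a := by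
  have : Fintype F4 := Fintype.ofFinite _
  have h := FiniteField.pow_card a
  have hc : Fintype.card F4 = 4 := by
    rw [← Nat.card_eq_fintype_card, GaloisField.card 2 2 (by norm_num)]; norm_num
  rw [hc] at h
  rw [← pow_mul]; exact h

lemma bta_bta {n : ℕ} (hn : 0 < n) (p : Polynomial F4) :
    (X ^ n - 1 : Polynomial F4) ∣ bta n (bta n p) - p := by
  induction p using Polynomial.induction_on' with
  | add p q hp hq =>
    have := dvd_add hp hq
    rw [map_add, map_add]
    convert this using 1; ring
  | monomial i a =>
    rw [← C_mul_X_pow_eq_monomial]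
    rw [map_mul, map_mul, bta_C, bta_C, F4_pow4]
    simp only [map_pow, bta_X]
    rw [← mul_sub]
    apply Dvd.dvd.mul_left
    rw [← pow_mul, ← pow_mul]
    obtain ⟨m, rfl⟩ : ∃ m, n = m + 1 := ⟨n - 1, by omega⟩
    rcases Nat.eq_zero_or_pos m with rfl | hm
    · rw [dvd_sub_comm]
      simpa using sub_one_dvd_pow_sub_one (X : Polynomial F4) i
    · obtain ⟨l, rfl⟩ : ∃ l, m = l + 1 := ⟨m - 1, by omega⟩
      have := P_dvd_shift (l + 1 + 1) (l * i) i
      convert this using 3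
      simp; ring

lemma hermInner_eq {n : ℕ} (hn : 0 < n) (p q : Polynomial F4) :
    hermInner (coeffVec n p) (coeffVec n q) = coeffVec n (p * bta n q) ⟨0, hn⟩ := by
  induction p using Polynomial.induction_on' with
  | add p p' hp hp' =>
    rw [add_mul, coeffVec_add, coeffVec_add, Pi.add_apply, ← hp, ← hp']
    simp [hermInner, add_mul, Finset.sum_add_distrib]
  | monomial i a =>
    induction q using Polynomial.induction_on' with
    | add p p' hp hp' =>
      rw [map_add, mul_add, coeffVec_add, coeffVec_add, hermInner_add_right, Pi.add_apply, hp, hp']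
    | monomial j b =>
      rw [← C_mul_X_pow_eq_monomial, ← C_mul_X_pow_eq_monomial]
      have e : C a * X ^ i * bta n (C b * X ^ j) = C (a * b ^ 2) * X ^ (i + (n - 1) * j) := by
        simp only [map_mul, map_pow, bta_C, bta_X]; ring
      rw [e, coeffVec_mono]
      simp only [hermInner, coeffVec_mono]
      have key : (i + (n - 1) * j) % n = 0 ↔ i % n = j % n := by
        obtain ⟨m, rfl⟩ : ∃ m, n = m + 1 := ⟨n - 1, by omega⟩
        rw [← Nat.dvd_iff_mod_eq_zero, ← ZMod.natCast_eq_zero_iff]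
        change _ ↔ i ≡ j [MOD (m+1)]
        rw [← ZMod.natCast_eq_natCast_iff]
        have hm : (m : ZMod (m+1)) = -1 := by
          have := ZMod.natCast_self (m+1)
          push_cast at this
          exact eq_neg_of_add_eq_zero_left this
        push_cast
        simp only [hm]
        rw [neg_one_mul, ← sub_eq_add_neg, sub_eq_zero]
      simp only [key]
      rw [Finset.sum_eq_single ⟨i % n, Nat.mod_lt _ hn⟩]
      · by_cases h : i % n = j % n
        · simp [h]
        · simp [h, Ne.symm h]
      · intro k _ hk
        rw [if_neg]; · simp
        intro h; apply hk; ext; exact h.symm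
      · simp

lemma nondeg {n : ℕ} (hn : 0 < n) (f : Polynomial F4)
    (h : ∀ a, coeffVec n (a * f) ⟨0, hn⟩ = 0) : (X ^ n - 1) ∣ f := by
  rw [← coeffVec_eq_zero hn]
  ext k
  have h1 := hermInner_eq hn f (X ^ (k : ℕ))
  rw [mul_comm, h] at h1
  have h2 : ∀ l, coeffVec n (X ^ (k : ℕ)) l = if k = l then 1 else 0 := by
    intro l
    have := coeffVec_mono (n := n) 1 k l
    simpa [Nat.mod_eq_of_lt k.2, Fin.val_inj] using this
  simp only [hermInner, h2] at h1
  simpa using h1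

lemma natDeg_lt {n : ℕ} (hn : 0 < n) {r : Polynomial F4} (hd : r.degree < (n : WithBot ℕ)) :
    r.natDegree < n := by
  by_cases h : r = 0
  · simpa [h] using hn
  · exact (Polynomial.natDegree_lt_iff_degree_lt h).2 hd

lemma conjT_congr {n : ℕ} (hn : 0 < n) (f : Polynomial F4) :
    (X ^ n - 1) ∣ conjT n f - bta n f := by
  have e1 : (X ^ n - 1) ∣ bta n (f % (X ^ n - 1)) - bta n f := by
    rw [← map_sub]
    apply bta_dvd
    refine ⟨-(f / (X ^ n - 1)), ?_⟩
    linear_combination EuclideanDomain.mod_add_div f (X ^ n - 1)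
  suffices h : (X ^ n - 1) ∣ conjT n f - bta n (f % (X ^ n - 1)) by
    have := dvd_add h e1
    simpa using this
  unfold conjT
  have hd := mod_natDegree_lt hn f
  generalize f % (X ^ n - 1) = r at hd
  have hr : r = ∑ i ∈ Finset.range n, C (r.coeff i) * X ^ i :=
    Polynomial.as_sum_range_C_mul_X_pow' r (natDeg_lt hn hd)
  have hb : bta n r = ∑ i ∈ Finset.range n, C (r.coeff i ^ 2) * X ^ ((n - 1) * i) := by
    conv_lhs => rw [hr]
    simp only [map_sum, map_mul, map_pow, bta_C, bta_X, ← pow_mul]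
  rw [hb, Finset.range_eq_Ico, Finset.sum_eq_sum_Ico_succ_bot hn]
  simp only [mul_zero, pow_zero, mul_one, zero_add, add_sub_add_left_eq_sub]
  rw [← Finset.sum_sub_distrib]
  apply Finset.dvd_sum
  intro i hi
  rw [Finset.mem_Ico] at hi
  rw [← mul_sub]
  apply Dvd.dvd.mul_left
  rw [dvd_sub_comm]
  have := P_dvd_shift n (i - 1) (n - i)
  convert this using 3
  obtain ⟨j, rfl⟩ : ∃ j, i = j + 1 := ⟨i - 1, by omega⟩
  obtain ⟨m, rfl⟩ : ∃ m, n = j + 1 + m := ⟨n - (j + 1), by omega⟩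
  have e1 : j + 1 + m - 1 = j + m := by omega
  have e2 : j + 1 + m - (j + 1) = m := by omega
  rw [e1, e2, Nat.add_sub_cancel]; ring

lemma dualGen_congr {n : ℕ} (hn : 0 < n) (g h : Polynomial F4) (hh : (X ^ n - 1) / g = h) :
    (X ^ n - 1) ∣ dualGen n g - X ^ h.natDegree * bta n h := by
  unfold dualGen
  rw [hh]
  have hb : bta n h = ∑ i ∈ Finset.range (h.natDegree + 1),
      C (h.coeff i ^ 2) * X ^ ((n - 1) * i) := by
    conv_lhs => rw [h.as_sum_range_C_mul_X_pow]
    simp only [map_sum, map_mul, map_pow, bta_C, bta_X, ← pow_mul]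
  rw [hb, Finset.mul_sum, ← Finset.sum_sub_distrib]
  apply Finset.dvd_sum
  intro i hi
  rw [Finset.mem_range] at hi
  rw [mul_left_comm, ← mul_sub, ← pow_add]
  apply Dvd.dvd.mul_left
  rw [dvd_sub_comm]
  have := P_dvd_shift n i (h.natDegree - i)
  convert this using 3
  obtain ⟨m, rfl⟩ : ∃ m, n = m + 1 := ⟨n - 1, by omega⟩
  obtain ⟨j, hj⟩ : ∃ j, h.natDegree = i + j := ⟨h.natDegree - i, by omega⟩
  rw [hj, Nat.add_sub_cancel, Nat.add_sub_cancel_left]; ring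

/-- turn a hypothesis on dualGen into one on `bta h` -/
lemma hyp_conv {n : ℕ} (hn : 0 < n) (g g' h c c' : Polynomial F4) (hh : (X ^ n - 1) / g' = h)
    (hg : g ∣ X ^ n - 1) (hc : (X ^ n - 1) ∣ c - c')
    (H : g ∣ (c * dualGen n g') % (X ^ n - 1)) : g ∣ c' * bta n h := by
  have h1 : g ∣ c * dualGen n g' := (EuclideanDomain.dvd_mod_iff hg).1 H
  have h2 := hg.trans (dualGen_congr hn g' h hh)
  have h3 := hg.trans hc
  have h4 : g ∣ X ^ h.natDegree * (c' * bta n h) := by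
    have := dvd_sub (dvd_sub h1 (h2.mul_left c)) (h3.mul_right (X ^ h.natDegree * bta n h))
    convert this using 1; ring
  have hco : IsCoprime (X ^ h.natDegree) g := by
    apply IsCoprime.pow_left
    apply IsCoprime.of_isCoprime_of_dvd_right _ hg
    refine ⟨X ^ (n - 1), -1, ?_⟩
    rw [← pow_succ, Nat.sub_add_cancel hn]; ring
  exact hco.symm.dvd_of_dvd_mul_left h4

lemma two_zero : (2 : Polynomial F4) = 0 := by
  have : CharP (Polynomial F4) 2 := inferInstance
  exact_mod_cast CharP.cast_eq_zero (Polynomial F4) 2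

lemma mem_C {n : ℕ} (hn : 0 < n) (g₁ g₂ ν U V : Polynomial F4)
    (hcop : IsCoprime (ν - 1) (X ^ n - 1))
    (hA : g₁ ∣ ν * U + V) (hB : g₂ ∣ U + ν * V) :
    (coeffVec n U, coeffVec n V) ∈ Cqc n g₁ g₂ ν := by
  obtain ⟨s, hs⟩ := hA
  obtain ⟨t, ht⟩ := hB
  obtain ⟨a, b, hab⟩ := hcop
  have hk : (X ^ n - 1) ∣ a ^ 2 * (ν ^ 2 + 1) - 1 := by
    refine ⟨-b * (a * (ν - 1) + 1), ?_⟩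
    linear_combination (a * (ν - 1) + 1) * hab + a ^ 2 * ν * two_zero
  have e : (coeffVec n U, coeffVec n V) =
      (coeffVec n ((a ^ 2 * s) * ν * g₁), coeffVec n ((a ^ 2 * s) * g₁)) +
      (coeffVec n ((a ^ 2 * t) * g₂), coeffVec n ((a ^ 2 * t) * ν * g₂)) := by
    rw [Prod.mk_add_mk, ← coeffVec_add, ← coeffVec_add]
    congr 1
    · apply coeffVec_congr hn
      rw [dvd_sub_comm]
      convert hk.mul_right U using 1
      linear_combination -a ^ 2 * ν * hs - a ^ 2 * ht + a ^ 2 * ν * V * two_zero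
    · apply coeffVec_congr hn
      rw [dvd_sub_comm]
      convert hk.mul_right V using 1
      linear_combination -a ^ 2 * hs - a ^ 2 * ν * ht + a ^ 2 * ν * U * two_zero
  rw [e]
  refine Submodule.add_mem _ (Submodule.subset_span (Or.inl ⟨_, rfl⟩))
    (Submodule.subset_span (Or.inr ⟨_, rfl⟩))

/-- the dimension part -/
lemma dim_C {n : ℕ} (hn : 0 < n) (g₁ g₂ ν h₁ h₂ : Polynomial F4)
    (hg₁m : g₁.Monic) (hg₂m : g₂.Monic)
    (e₁ : X ^ n - 1 = g₁ * h₁) (e₂ : X ^ n - 1 = g₂ * h₂)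
    (hcop : IsCoprime (ν - 1) (X ^ n - 1)) :
    Module.finrank F4 ↥(Cqc n g₁ g₂ ν) = 2 * n - g₁.natDegree - g₂.natDegree := by
  have hP := (P_monic hn)
  have deg : ∀ g h : Polynomial F4, g.Monic → X ^ n - 1 = g * h →
      h.Monic ∧ g.natDegree + h.natDegree = n := by
    intro g h hg e
    have hh : h.Monic := hg.of_mul_monic_left (e ▸ hP)
    refine ⟨hh, ?_⟩
    rw [← hg.natDegree_mul hh, ← e, P_natDegree]
  obtain ⟨hm1, hd1⟩ := deg g₁ h₁ hg₁m e₁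
  obtain ⟨hm2, hd2⟩ := deg g₂ h₂ hg₂m e₂
  let Φ : (degreeLT F4 h₁.natDegree × degreeLT F4 h₂.natDegree) →ₗ[F4]
      (Fin n → F4) × (Fin n → F4) :=
    LinearMap.coprod
      ((((cvL n).comp (LinearMap.mulRight F4 (ν * g₁))).prod
        ((cvL n).comp (LinearMap.mulRight F4 g₁))).comp (Submodule.subtype _))
      ((((cvL n).comp (LinearMap.mulRight F4 g₂)).prod
        ((cvL n).comp (LinearMap.mulRight F4 (ν * g₂)))).comp (Submodule.subtype _))
  have hΦ : ∀ x, Φ x = (coeffVec n (x.1.1 * (ν * g₁) + x.2.1 * g₂),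
      coeffVec n (x.1.1 * g₁ + x.2.1 * (ν * g₂))) := by
    intro x
    rw [coeffVec_add, coeffVec_add]
    rfl
  have small : ∀ g h a : Polynomial F4, g.Monic → X ^ n - 1 = g * h →
      a ∈ degreeLT F4 h.natDegree → (X ^ n - 1) ∣ a * g → a = 0 := by
    intro g h a hg e ha hdvd
    obtain ⟨hh, hd⟩ := deg g h hg e
    rw [e, mul_comm a g] at hdvd
    have := (mul_dvd_mul_iff_left hg.ne_zero).1 hdvd
    apply Polynomial.eq_zero_of_dvd_of_degree_lt this
    rw [mem_degreeLT] at ha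
    rwa [degree_eq_natDegree hh.ne_zero]
  have cop2 : IsCoprime (X ^ n - 1) ((ν - 1) ^ 2) := hcop.symm.pow_right
  have inj : Function.Injective Φ := by
    rw [← LinearMap.ker_eq_bot, LinearMap.ker_eq_bot']
    rintro ⟨⟨a, ha⟩, ⟨b, hb⟩⟩ hx
    rw [hΦ, Prod.mk_eq_zero, coeffVec_eq_zero hn, coeffVec_eq_zero hn] at hx
    obtain ⟨hx1, hx2⟩ := hx
    simp only at hx1 hx2
    have ha0 : a = 0 := by
      apply small g₁ h₁ a hg₁m e₁ ha
      apply cop2.dvd_of_dvd_mul_left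
      have := dvd_add (hx1.mul_left ν) hx2
      convert this using 1
      linear_combination (-ν * a * g₁ - ν * b * g₂) * two_zero
    have hb0 : b = 0 := by
      apply small g₂ h₂ b hg₂m e₂ hb
      apply cop2.dvd_of_dvd_mul_left
      have := dvd_add (hx2.mul_left ν) hx1
      convert this using 1
      linear_combination (-ν * a * g₁ - ν * b * g₂) * two_zero
    subst ha0; subst hb0; rfl
  have range : LinearMap.range Φ = Cqc n g₁ g₂ ν := by
    apply le_antisymm
    · rintro _ ⟨x, rfl⟩
      rw [hΦ, coeffVec_add, coeffVec_add, ← Prod.mk_add_mk]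
      refine Submodule.add_mem _ (Submodule.subset_span (Or.inl ⟨x.1.1, ?_⟩))
        (Submodule.subset_span (Or.inr ⟨x.2.1, ?_⟩)) <;> simp only [mul_assoc]
    · have mem : ∀ h a : Polynomial F4, h.Monic → a % h ∈ degreeLT F4 h.natDegree := by
        intro h a hh
        rw [mem_degreeLT, ← degree_eq_natDegree hh.ne_zero]
        exact degree_mod_lt _ hh.ne_zero
      have hdv : ∀ g h a : Polynomial F4, X ^ n - 1 = g * h →
          (X ^ n - 1) ∣ a * g - a % h * g := by
        intro g h a e
        refine ⟨a / h, ?_⟩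
        rw [e]
        linear_combination -g * EuclideanDomain.mod_add_div a h
      refine Submodule.span_le.2 ?_
      rintro x (⟨a, rfl⟩ | ⟨a, rfl⟩)
      · refine ⟨(⟨a % h₁, mem _ _ hm1⟩, 0), ?_⟩
        rw [hΦ]
        have := hdv g₁ h₁ a e₁
        congr 1
        · apply coeffVec_congr hn
          rw [dvd_sub_comm]
          convert this.mul_left ν using 1
          simp; ring
        · apply coeffVec_congr hn
          rw [dvd_sub_comm]
          convert this using 1
          simp
      · refine ⟨(0, ⟨a % h₂, mem _ _ hm2⟩), ?_⟩
        rw [hΦ]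
        have := hdv g₂ h₂ a e₂
        congr 1
        · apply coeffVec_congr hn
          rw [dvd_sub_comm]
          convert this using 1
          simp
        · apply coeffVec_congr hn
          rw [dvd_sub_comm]
          convert this.mul_left ν using 1
          simp; ring
  rw [← range, LinearMap.finrank_range_of_inj inj]
  have fr : ∀ k, Module.finrank F4 (degreeLT F4 k) = k := by
    intro k
    rw [(degreeLTEquiv F4 k).finrank_eq]; simp
  have ff : ∀ k, Module.Finite F4 (degreeLT F4 k) := fun k =>
    Module.Finite.equiv (degreeLTEquiv F4 k).symm
  have := ff h₁.natDegree
  have := ff h₂.natDegree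
  rw [Module.finrank_prod, fr, fr]
  omega

/-- if `w` is orthogonal to everything generated by `g`, then `w` is a multiple of `bta h` -/
lemma ann_step {n : ℕ} (hn : 0 < n) (g h f : Polynomial F4) (hg : g ≠ 0)
    (e : X ^ n - 1 = g * h) (hf : ∀ a, coeffVec n (a * (g * f)) ⟨0, hn⟩ = 0) :
    bta n h ∣ bta n f := by
  have := nondeg hn _ hf
  rw [e] at this
  exact bta_map_dvd n ((mul_dvd_mul_iff_left hg).1 this)

/-- The 2-generator quasi-cyclic code `C(g₁,g₂,ν)` is Hermitian dual-containing of
`F₄`-dimension `2n - deg g₁ - deg g₂`. -/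
theorem C_dual_containing (n : ℕ) (hn : Odd n) (g₁ g₂ ν : Polynomial F4)
    (hg₁m : g₁.Monic) (hg₁d : g₁ ∣ X ^ n - 1)
    (hg₂m : g₂.Monic) (hg₂d : g₂ ∣ X ^ n - 1)
    (hcop : IsCoprime (ν - 1) (X ^ n - 1))
    (h1 : g₁ ∣ dualGen n g₁)
    (h2 : g₂ ∣ dualGen n g₂)
    (h3 : g₂ ∣ ((ν + conjT n ν) * dualGen n g₁) % (X ^ n - 1))
    (h4 : g₁ ∣ ((ν * conjT n ν + 1) * dualGen n g₁) % (X ^ n - 1))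
    (h5 : g₂ ∣ ((ν * conjT n ν + 1) * dualGen n g₂) % (X ^ n - 1)) :
    hermDualPair (Cqc n g₁ g₂ ν) ≤ Cqc n g₁ g₂ ν ∧
      Module.finrank F4 ↥(Cqc n g₁ g₂ ν) = 2 * n - g₁.natDegree - g₂.natDegree := by
  have hn0 : 0 < n := hn.pos
  obtain ⟨k₁, e₁⟩ := hg₁d
  obtain ⟨k₂, e₂⟩ := hg₂d
  have d₁ : (X ^ n - 1) / g₁ = k₁ := by
    rw [e₁]; exact mul_div_cancel_left₀ _ hg₁m.ne_zero
  have d₂ : (X ^ n - 1) / g₂ = k₂ := by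
    rw [e₂]; exact mul_div_cancel_left₀ _ hg₂m.ne_zero
  have hg₁d : g₁ ∣ X ^ n - 1 := ⟨_, e₁⟩
  have hg₂d : g₂ ∣ X ^ n - 1 := ⟨_, e₂⟩
  refine ⟨?_, dim_C hn0 g₁ g₂ ν k₁ k₂ hg₁m hg₂m e₁ e₂ hcop⟩
  have hc := conjT_congr hn0 ν
  set N := bta n ν with hN
  have H3 : g₂ ∣ (ν + N) * bta n k₁ :=
    hyp_conv hn0 g₂ g₁ k₁ _ _ d₁ hg₂d (by convert hc using 1; ring) h3
  have H4 : g₁ ∣ (ν * N + 1) * bta n k₁ :=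
    hyp_conv hn0 g₁ g₁ k₁ _ _ d₁ hg₁d (by convert hc.mul_left ν using 1; ring) h4
  have H5 : g₂ ∣ (ν * N + 1) * bta n k₂ :=
    hyp_conv hn0 g₂ g₂ k₂ _ _ d₂ hg₂d (by convert hc.mul_left ν using 1; ring) h5
  have hk₁ : k₁ ≠ 0 := by
    rintro rfl; exact (P_monic (n := n) hn0).ne_zero (by rw [e₁, mul_zero])
  -- the dual version of H3
  have H6 : g₁ ∣ (ν + N) * bta n k₂ := by
    have a1 : (X ^ n - 1) ∣ ((ν + N) * bta n k₁) * k₂ := by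
      rw [e₂]; exact mul_dvd_mul_right H3 k₂
    have a2 := bta_dvd n a1
    simp only [map_mul, map_add, ← hN] at a2
    have b1 := bta_bta hn0 k₁
    have b2 := bta_bta hn0 ν
    rw [← hN] at b2
    have a3 : (X ^ n - 1) ∣ k₁ * ((ν + N) * bta n k₂) := by
      have := dvd_sub (dvd_sub a2 (b1.mul_left ((N + bta n N) * bta n k₂)))
        (b2.mul_left (k₁ * bta n k₂))
      convert this using 1; ring
    rw [e₁, mul_comm g₁] at a3
    exact (mul_dvd_mul_iff_left hk₁).1 a3
  rintro ⟨u, v⟩ huv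
  obtain ⟨U, rfl⟩ := coeffVec_surj n u
  obtain ⟨V, rfl⟩ := coeffVec_surj n v
  have bU := bta_bta hn0 U
  have bV := bta_bta hn0 V
  have s1 : bta n k₁ ∣ bta n (ν * bta n U + bta n V) := by
    apply ann_step hn0 g₁ k₁ _ hg₁m.ne_zero e₁
    intro a
    have := huv _ (Submodule.subset_span (Or.inl ⟨a, rfl⟩))
    simp only [hermInner2, hermInner_eq hn0] at this
    rw [← Pi.add_apply, ← coeffVec_add] at this
    convert this using 2; ring
  have s2 : bta n k₂ ∣ bta n (bta n U + ν * bta n V) := by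
    apply ann_step hn0 g₂ k₂ _ hg₂m.ne_zero e₂
    intro a
    have := huv _ (Submodule.subset_span (Or.inr ⟨a, rfl⟩))
    simp only [hermInner2, hermInner_eq hn0] at this
    rw [← Pi.add_apply, ← coeffVec_add] at this
    convert this using 2; ring
  simp only [map_add, map_mul, ← hN] at s1 s2
  -- coprimality of `N ^ 2 + 1`
  have cop : IsCoprime (X ^ n - 1) (N ^ 2 + 1) := by
    obtain ⟨a, b, hab⟩ := hcop
    have h := congrArg (bta n) hab
    simp only [map_add, map_mul, map_sub, map_one, ← hN] at h
    obtain ⟨c, hcc⟩ := bta_P n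
    simp only [map_sub, map_one] at hcc
    rw [hcc] at h
    have h' : IsCoprime (X ^ n - 1) (N - 1) := ⟨bta n b * c, bta n a, by linear_combination h⟩
    have h'' : IsCoprime (X ^ n - 1) ((N - 1) ^ 2) := h'.pow_right
    convert h'' using 1
    linear_combination N * two_zero
  have fin : ∀ g A B U' V' : Polynomial F4, g ∣ X ^ n - 1 →
      g ∣ A * bta n k₁ → g ∣ B * bta n k₂ →
      U' = bta n (bta n U) → V' = bta n (bta n V) →
      g ∣ A * (N * U + V) + B * (U + N * V) := by
    intro g A B U' V' hg hA hB hU hV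
    have t1 : g ∣ A * (N * U' + V') := by
      rw [hU, hV]; exact hA.trans (mul_dvd_mul_left A s1)
    have t2 : g ∣ B * (U' + N * V') := by
      rw [hU, hV]; exact hB.trans (mul_dvd_mul_left B s2)
    rw [← hU] at bU
    rw [← hV] at bV
    have := dvd_sub (dvd_sub (dvd_add t1 t2) ((hg.trans bU).mul_left (A * N + B)))
      ((hg.trans bV).mul_left (A + B * N))
    convert this using 1; ring
  apply mem_C hn0 _ _ _ _ _ hcop
  · have := fin g₁ _ _ _ _ hg₁d H4 H6 rfl rfl
    apply (cop.of_isCoprime_of_dvd_left hg₁d).dvd_of_dvd_mul_left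
    convert this using 1
    linear_combination (-(ν * N * V) - N * U) * two_zero
  · have := fin g₂ _ _ _ _ hg₂d H3 H5 rfl rfl
    apply (cop.of_isCoprime_of_dvd_left hg₂d).dvd_of_dvd_mul_left
    convert this using 1
    linear_combination (-(ν * N * U) - N * V) * two_zero

end
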